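/- Let q be a prime power and let k ≥ 3 and n be integers with n ≥ k(k+1)/2 + k − 3 and n ≤ q. Then for every choice of pairwise distinct evaluation points α_1,...,α_n ∈ F_q, the Reed-Solomon code RS_α(n,k) has insdel distance at most 2n − 4k + 4. -/

import Mathlib

/-!
The code contains two distinct words with a common subsequence of length `2k - 2` as soon as
`n ≥ 2k - 1`. Write `k = m + 1`, call the first `m + 1` evaluation points `x_0, …, x_m` and the next
`m` points `y_0, …, y_{m-1}`, and let `h = ∏ (X - y_j)`, which has degree `m < k`. Interpolation at
the `x_i` gives `f` of degree less than `k` with `f(x_{i+1}) = f(x_i) + h(x_{i+1})`. Then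
`g = f - h` satisfies `g(x_{i+1}) = f(x_i)` and `g(y_j) = f(y_j)`, so on these `2m + 1` positions
the word of `f` without its letter at `x_m` equals the word of `g` without its letter at `x_0`.
-/

open scoped BigOperators

/-- Length of a longest common subsequence of two words of length `n`. -/
noncomputable def lcsLen {α : Type*} {n : ℕ} (u v : Fin n → α) : ℕ :=
  sSup {ℓ : ℕ | ∃ w : List α, w.length = ℓ ∧ w.Sublist (List.ofFn u) ∧ w.Sublist (List.ofFn v)}

/-- Insdel distance between two words of length `n`: `d_I(u,v) = 2n - 2·ℓ_LCS(u,v)`. -/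
noncomputable def insdelDist {α : Type*} {n : ℕ} (u v : Fin n → α) : ℕ :=
  2 * n - 2 * lcsLen u v

/-- Minimum insdel distance of a code. -/
noncomputable def insdelDistSet {α : Type*} {n : ℕ} (C : Set (Fin n → α)) : ℕ :=
  sInf {d : ℕ | ∃ u ∈ C, ∃ v ∈ C, u ≠ v ∧ insdelDist u v = d}

/-- Minimum Hamming distance of a code. -/
noncomputable def hammingDistSet {α : Type*} {n : ℕ} [DecidableEq α] (C : Set (Fin n → α)) : ℕ :=
  sInf {d : ℕ | ∃ u ∈ C, ∃ v ∈ C, u ≠ v ∧ hammingDist u v = d}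

section CommonSubsequence

variable {A : Type*} {l m n : ℕ}

theorem ofFn_comp_sublist_ofFn (u : Fin n → A) (e : Fin m ↪o Fin n) :
    (List.ofFn (u ∘ e)).Sublist (List.ofFn u) := by
  rw [List.sublist_iff_exists_fin_orderEmbedding_get_eq]
  refine ⟨(Fin.castOrderIso List.length_ofFn).toOrderEmbedding.trans
    (e.trans (Fin.castOrderIso List.length_ofFn.symm).toOrderEmbedding), fun s => ?_⟩
  simp only [List.get_ofFn]
  rfl

theorem le_lcsLen_of_orderEmbedding {u v : Fin n → A} (e e' : Fin m ↪o Fin n)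
    (h : u ∘ e = v ∘ e') : m ≤ lcsLen u v := by
  have hbdd : BddAbove {ℓ : ℕ | ∃ w : List A,
      w.length = ℓ ∧ w.Sublist (List.ofFn u) ∧ w.Sublist (List.ofFn v)} := by
    refine ⟨n, ?_⟩
    rintro _ ⟨w, rfl, hw, -⟩
    simpa only [List.length_ofFn] using hw.length_le
  exact le_csSup hbdd ⟨List.ofFn (u ∘ e), List.length_ofFn, ofFn_comp_sublist_ofFn u e,
    h ▸ ofFn_comp_sublist_ofFn v e'⟩

/-- The prefixes of length `m + 1` become equal when the letter `l` of `u` and the letter `0` of `v`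
are deleted. -/
theorem le_lcsLen_of_shift {u v : Fin n → A} (hl : l ≤ m) (hm : m < n)
    (hshift : ∀ i (hi : i < l), u ⟨i, by omega⟩ = v ⟨i + 1, by omega⟩)
    (hagree : ∀ i (_ : l < i) (hi : i ≤ m), u ⟨i, by omega⟩ = v ⟨i, by omega⟩) :
    m ≤ lcsLen u v := by
  let p : Fin (m + 1) := ⟨l, by omega⟩
  refine le_lcsLen_of_orderEmbedding ((Fin.succAboveOrderEmb p).trans (Fin.castLEOrderEmb hm))
    ((Fin.succOrderEmb m).trans (Fin.castLEOrderEmb hm)) (funext fun s => ?_)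
  change u (Fin.castLE hm (p.succAbove s)) = v (Fin.castLE hm s.succ)
  rcases lt_or_ge s.castSucc p with hs | hs
  · rw [Fin.succAbove_of_castSucc_lt p s hs]
    exact hshift s hs
  · rw [Fin.succAbove_of_le_castSucc p s hs]
    exact hagree (s + 1) (Nat.lt_succ_of_le hs) s.isLt

theorem insdelDistSet_le_insdelDist {C : Set (Fin n → A)} {u v : Fin n → A}
    (hu : u ∈ C) (hv : v ∈ C) (huv : u ≠ v) : insdelDistSet C ≤ insdelDist u v :=
  Nat.sInf_le ⟨u, hu, v, hv, huv, rfl⟩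

end CommonSubsequence

section ReedSolomon

variable {F : Type*} [Field F]

/-- The Reed-Solomon code `RS_α(n, k)`: evaluations at the points `α` of the polynomials of degree
less than `k`. It is a plain set of words, and neither the distinctness of the points nor `k ≤ n`
is built in. -/
def reedSolomonCode {ι : Type*} (α : ι → F) (k : ℕ) : Set (ι → F) :=
  {c | ∃ f : Polynomial F, f.degree < k ∧ c = fun t => f.eval (α t)}

theorem exists_degree_lt_eval_succ_eq_add {m : ℕ} {x : Fin (m + 1) → F}
    (hx : Function.Injective x) (d : Fin m → F) :
    ∃ f : Polynomial F, f.degree < (m + 1 : ℕ) ∧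
      ∀ i, f.eval (x i.succ) = f.eval (x i.castSucc) + d i := by
  have hx' : Set.InjOn x (Finset.univ : Finset (Fin (m + 1))) := hx.injOn
  refine ⟨Lagrange.interpolate Finset.univ x (Fin.partialSum d), ?_, fun i => ?_⟩
  · simpa only [Finset.card_fin] using Lagrange.degree_interpolate_lt (Fin.partialSum d) hx'
  · simp only [Lagrange.eval_interpolate_at_node _ hx' (Finset.mem_univ _), Fin.partialSum_succ]

theorem exists_ne_eval_eq_eval_succ {m : ℕ} {x : Fin (m + 1) → F}
    (hx : Function.Injective x) (y : Fin m → F) :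
    ∃ f g : Polynomial F, f.degree < (m + 1 : ℕ) ∧ g.degree < (m + 1 : ℕ) ∧ f ≠ g ∧
      (∀ i : Fin m, f.eval (x i.castSucc) = g.eval (x i.succ)) ∧
      ∀ j, f.eval (y j) = g.eval (y j) := by
  let h : Polynomial F := Lagrange.nodal Finset.univ y
  have hdeg : h.degree < (m + 1 : ℕ) := by
    rw [Lagrange.degree_nodal, Finset.card_fin]
    exact_mod_cast m.lt_succ_self
  obtain ⟨f, hf, hstep⟩ := exists_degree_lt_eval_succ_eq_add hx fun i => h.eval (x i.succ)
  refine ⟨f, f - h, hf, (Polynomial.degree_sub_le f h).trans_lt (max_lt hf hdeg), ?_,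
    fun i => ?_, fun j => ?_⟩
  · exact fun hfg => Lagrange.nodal_ne_zero (sub_eq_self.1 hfg.symm)
  · rw [Polynomial.eval_sub, hstep, add_sub_cancel_right]
  · rw [Polynomial.eval_sub, Lagrange.eval_nodal_at_node (Finset.mem_univ j), sub_zero]

theorem eval_comp_ne_of_ne {ι : Type*} [Fintype ι] {k : ℕ} (hk : k ≤ Fintype.card ι)
    {α : ι → F} (hα : Function.Injective α) {f g : Polynomial F} (hf : f.degree < k)
    (hg : g.degree < k) (hfg : f ≠ g) : (fun t => f.eval (α t)) ≠ fun t => g.eval (α t) := by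
  have hk' : (k : WithBot ℕ) ≤ (Finset.univ : Finset ι).card := by
    simpa only [Finset.card_univ, Nat.cast_le] using hk
  exact fun h => hfg <| Polynomial.eq_of_degrees_lt_of_eval_index_eq Finset.univ hα.injOn
    (hf.trans_le hk') (hg.trans_le hk') fun t _ => congrFun h t

theorem exists_reedSolomonCode_two_mul_sub_two_le_lcsLen {n k : ℕ} (hk : 0 < k) (hn : 2 * k ≤ n + 1)
    {α : Fin n → F} (hα : Function.Injective α) :
    ∃ u ∈ reedSolomonCode α k, ∃ v ∈ reedSolomonCode α k, u ≠ v ∧ 2 * k - 2 ≤ lcsLen u v := by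
  obtain ⟨m, rfl⟩ := Nat.exists_eq_add_one.2 hk
  let x : Fin (m + 1) → F := fun i => α ⟨i, by omega⟩
  let y : Fin m → F := fun j => α ⟨m + 1 + j, by omega⟩
  have hx : Function.Injective x := fun i j hij => Fin.ext (Fin.mk.inj (hα hij))
  obtain ⟨f, g, hf, hg, hfg, hshift, hagree⟩ := exists_ne_eval_eq_eval_succ hx y
  have hcard : m + 1 ≤ Fintype.card (Fin n) := by
    rw [Fintype.card_fin]
    omega
  refine ⟨_, ⟨f, hf, rfl⟩, _, ⟨g, hg, rfl⟩, eval_comp_ne_of_ne hcard hα hf hg hfg, ?_⟩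
  refine le_lcsLen_of_shift (l := m) (by omega) (by omega) (fun i hi => hshift ⟨i, hi⟩)
    fun i hmi hi => ?_
  obtain ⟨j, rfl⟩ := Nat.exists_eq_add_of_lt hmi
  simpa only [y, Nat.add_right_comm] using hagree ⟨j, by omega⟩

/-- The bound is `2 * n + 4 - 4 * k` because for `n = 2 * k - 1` the subtraction in
`2 * n - 4 * k + 4` truncates, giving `4` instead of `2`. -/
theorem rs_insdel_upper_bound_general {n k : ℕ} (hk : 0 < k) (hn : 2 * k ≤ n + 1)
    {α : Fin n → F} (hα : Function.Injective α) :
    insdelDistSet (reedSolomonCode α k) ≤ 2 * n + 4 - 4 * k := by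
  obtain ⟨u, hu, v, hv, huv, hlcs⟩ := exists_reedSolomonCode_two_mul_sub_two_le_lcsLen hk hn hα
  calc insdelDistSet (reedSolomonCode α k)
    _ ≤ 2 * n - 2 * lcsLen u v := insdelDistSet_le_insdelDist hu hv huv
    _ ≤ 2 * n + 4 - 4 * k := by omega

end ReedSolomon

theorem two_mul_le_of_three_le {k : ℕ} (hk : 3 ≤ k) : 2 * k ≤ k * (k + 1) / 2 + k - 3 := by
  have : k + 3 ≤ k * (k + 1) / 2 := by
    rw [Nat.le_div_iff_mul_le two_pos]
    nlinarith
  omega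

/-- Theorem 3.9: if `k ≥ 3` and `n ≥ k(k+1)/2 + k - 3`, every `[n,k]` Reed-Solomon code
has insdel distance at most `2n - 4k + 4`. -/
theorem rs_insdel_upper_bound (q n k : ℕ) (F : Type*) [Field F] [Fintype F]
    (hF : Fintype.card F = q) (hk : 3 ≤ k)
    (hn : k * (k + 1) / 2 + k - 3 ≤ n) (hnq : n ≤ q)
    (α : Fin n → F) (hα : Function.Injective α) :
    insdelDistSet {c : Fin n → F |
        ∃ f : Polynomial F, f.degree < (k : ℕ) ∧ c = fun t => f.eval (α t)}
      ≤ 2 * n - 4 * k + 4 := by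
  have hkn : 2 * k ≤ n := (two_mul_le_of_three_le hk).trans hn
  exact (rs_insdel_upper_bound_general (by omega) (by omega) hα).trans (by omega)
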